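/- Let ℓ : ℝ → [0,∞) be an L-Lipschitz loss function with ℓ(0) = 0, 0 < δ < 1, p ∈ (1,2], W > 0, and let 𝒟_X and 𝒟_Y be distributions over ℝ^d and ℝ respectively with E[‖X‖₁] < ∞ and E[|Y|] < ∞; let 𝒟 = 𝒟_X × 𝒟_Y and ℱ_W = {(x,y) ↦ ℓ(⟨w,x⟩ − y) : w ∈ ℝ^d, ‖w‖₂ ≤ W}. Suppose ∞ > v_p ≥ (2L)^p·(sup_{‖w‖₂≤W} E[|⟨w,X⟩|^p] + E[|Y|^p]). Then for ε > 0, if m ≥ (400·16^p·v_p/ε^p)^{1/(p−1)} and κ ≥ max{κ₀(δ/8), 10⁶·ln(2)/99, 50·ln(8·N(ε/16, m)/δ)}, where κ₀(δ) = 4·1250²·ln(e/δ), N(ε, m) = (6W/β(ε,m,𝒟))^d, and β(ε,m,𝒟) = min(W/2, ε/(60000·L·(E[‖X‖₁] + E[|Y|])·m)), then with probability at least 1 − δ over Z = (X,Y) ∼ (𝒟^m)^κ, for all f ∈ ℱ_W it holds that |MoM(f, Z) − E_{Z'∼𝒟}[f(Z')]| ≤ ε. -/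

import Mathlib

/-! Fix `t > 0` and truncate a loss `f` at height `m * t`. Chebyshev's inequality for the truncation
and Markov's inequality for the excess bound the probability that a block mean of `f` misses `E[f]`
by more than `t` by `8 * E[|f| ^ p] * m / (m * t) ^ p`, which is at most `1 / 48` for the prescribed
`m` when `t = ε / 2`. A quarter of the `κ` independent blocks then fails with probability at most
`exp (-κ / 4)`, by a union bound over the sets of failing blocks.

To make this uniform over the ball of radius `W`, replace each predictor by a point of a `β`-net.
The losses of all predictors move by at most the single function `L * β * ‖x‖`, so its block means,
which are controlled by Markov's inequality, bound the discretization error for the whole class at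
once. The median stays within `ε` as long as fewer than half of the blocks are bad. -/

open MeasureTheory

/-- The median of `κ` real numbers: the `((κ+1)/2)`-th smallest if `κ` is odd and the
`(κ/2)`-th smallest if `κ` is even (both given by the zero-based index `(κ-1)/2`). -/
noncomputable def median {κ : ℕ} (a : Fin κ → ℝ) : ℝ :=
  ((List.ofFn a).mergeSort fun x y => decide (x ≤ y)).getD ((κ - 1) / 2) 0

/-- Sample mean of `f` on a block of `m` points. -/
noncomputable def blockMean {𝒳 : Type*} {m : ℕ} (f : 𝒳 → ℝ) (x : Fin m → 𝒳) : ℝ :=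
  (∑ j, f (x j)) / m

/-- The Median-of-Means estimator on a sample of `κ` blocks of `m` points. -/
noncomputable def mom {𝒳 : Type*} {m κ : ℕ} (f : 𝒳 → ℝ) (X : Fin κ → Fin m → 𝒳) : ℝ :=
  median fun i => blockMean f (X i)

/-- The class `ℱ_W` of losses of norm-constrained linear predictors:
`(x, y) ↦ ℓ(⟨w, x⟩ - y)` for `‖w‖₂ ≤ W`. -/
def linRegClass (d : ℕ) (ℓ : ℝ → ℝ) (W : ℝ) : Set (EuclideanSpace ℝ (Fin d) × ℝ → ℝ) :=
  {f | ∃ w : EuclideanSpace ℝ (Fin d), ‖w‖ ≤ W ∧ f = fun z => ℓ ((∑ i, w i * z.1 i) - z.2)}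

theorem median_eq_apply_sort {κ : ℕ} (hκ : 0 < κ) (a : Fin κ → ℝ) :
    median a = a (Tuple.sort a ⟨(κ - 1) / 2, by omega⟩) := by
  have hsort : (List.ofFn a).mergeSort (fun x y => decide (x ≤ y))
      = List.ofFn (a ∘ Tuple.sort a) := by
    refine List.Perm.eq_of_sortedLE (List.pairwise_mergeSort' (· ≤ ·) _).sortedLE
      (List.sortedLE_ofFn_iff.2 (Tuple.monotone_sort a)) ?_
    exact (List.mergeSort_perm _ _).trans (Equiv.Perm.ofFn_comp_perm _ a).symm
  rw [median, hsort, List.getD_eq_getElem _ _ (by rw [List.length_ofFn]; omega)]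
  simp

theorem median_mem_of_ordConnected {κ : ℕ} {I : Set ℝ} [I.OrdConnected] {a : Fin κ → ℝ}
    (ha : 2 * {i | a i ∉ I}.ncard < κ) : median a ∈ I := by
  have hκ : 0 < κ := by omega
  rw [median_eq_apply_sort hκ]
  set σ := Tuple.sort a
  set r : Fin κ := ⟨(κ - 1) / 2, by omega⟩ with hr
  have hmono : Monotone (a ∘ σ) := Tuple.monotone_sort a
  have exists_mem (s : Finset (Fin κ)) (hs : κ ≤ 2 * s.card) : ∃ i ∈ s, a (σ i) ∈ I := by
    by_contra! hbad
    have hsub : σ '' s ⊆ {i | a i ∉ I} := Set.image_subset_iff.2 hbad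
    have hcard := Set.ncard_le_ncard hsub
    rw [Set.ncard_image_of_injective _ σ.injective, Set.ncard_coe_finset] at hcard
    omega
  obtain ⟨i, hir, hi⟩ := exists_mem (Finset.Iic r) (by simp only [Fin.card_Iic, hr]; omega)
  obtain ⟨j, hrj, hj⟩ := exists_mem (Finset.Ici r) (by simp only [Fin.card_Ici, hr]; omega)
  exact Set.OrdConnected.out ‹_› hi hj ⟨hmono (Finset.mem_Iic.1 hir), hmono (Finset.mem_Ici.1 hrj)⟩

section BlockMean

variable {𝒳 : Type*} {m : ℕ}

theorem blockMean_sub (f g : 𝒳 → ℝ) (x : Fin m → 𝒳) :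
    blockMean (fun z => f z - g z) x = blockMean f x - blockMean g x := by
  simp only [blockMean, Finset.sum_sub_distrib, sub_div]

theorem abs_blockMean_sub_blockMean_le {f g h : 𝒳 → ℝ} (hfg : ∀ z, |f z - g z| ≤ h z)
    (x : Fin m → 𝒳) : |blockMean f x - blockMean g x| ≤ blockMean h x := by
  rw [← blockMean_sub, blockMean, blockMean, abs_div, Nat.abs_cast]
  gcongr
  exact (Finset.abs_sum_le_sum_abs _ _).trans (Finset.sum_le_sum fun j _ => hfg (x j))

theorem blockMean_nonneg {h : 𝒳 → ℝ} (hh : ∀ z, 0 ≤ h z) (x : Fin m → 𝒳) : 0 ≤ blockMean h x :=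
  div_nonneg (Finset.sum_nonneg fun j _ => hh (x j)) (Nat.cast_nonneg m)

variable [MeasurableSpace 𝒳] {ν : Measure 𝒳}

theorem abs_blockMean_sub_integral_le {f g h : 𝒳 → ℝ} (hf : Integrable f ν) (hg : Integrable g ν)
    (hh : Integrable h ν) (hfg : ∀ z, |f z - g z| ≤ h z) (x : Fin m → 𝒳) :
    |blockMean f x - ∫ z, f z ∂ν| ≤
      blockMean h x + |blockMean g x - ∫ z, g z ∂ν| + ∫ z, h z ∂ν := by
  have hmean := abs_blockMean_sub_blockMean_le hfg x
  have hint : |∫ z, g z ∂ν - ∫ z, f z ∂ν| ≤ ∫ z, h z ∂ν := by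
    rw [abs_sub_comm, ← integral_sub hf hg]
    exact abs_integral_le_integral_abs.trans (integral_mono (hf.sub hg).abs hh hfg)
  have htriangle := dist_triangle4 (blockMean f x) (blockMean g x) (∫ z, g z ∂ν) (∫ z, f z ∂ν)
  simp only [Real.dist_eq] at htriangle
  linarith

variable [IsProbabilityMeasure ν]

theorem memLp_blockMean {f : 𝒳 → ℝ} {q : ENNReal} (hf : MemLp f q ν) :
    MemLp (blockMean f) q (Measure.pi fun _ : Fin m => ν) := by
  change MemLp (fun x : Fin m → 𝒳 => (∑ j, f (x j)) / m) q _
  simp only [div_eq_mul_inv]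
  exact (memLp_finsetSum _ fun j _ =>
    hf.comp_measurePreserving (measurePreserving_eval (fun _ : Fin m => ν) j)).mul_const _

theorem integral_blockMean [NeZero m] {f : 𝒳 → ℝ} (hf : Integrable f ν) :
    ∫ x, blockMean f x ∂(Measure.pi fun _ : Fin m => ν) = ∫ z, f z ∂ν := by
  have hm : (m : ℝ) ≠ 0 := NeZero.ne _
  simp only [blockMean]
  rw [integral_div, integral_finsetSum _ fun j _ => integrable_comp_eval (i := j) hf]
  simp_rw [integral_comp_eval (μ := fun _ : Fin m => ν) hf.aestronglyMeasurable]
  simp [hm]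

theorem measure_le_blockMean_le {h : 𝒳 → ℝ} (hnn : ∀ z, 0 ≤ h z) (hh : Integrable h ν) {c : ℝ}
    (hc : 0 < c) :
    (Measure.pi fun _ : Fin m => ν) {x | c ≤ blockMean h x} ≤
      ENNReal.ofReal ((∫ z, h z ∂ν) / c) := by
  rcases eq_or_ne m 0 with rfl | hm
  · simp [blockMean, hc.not_ge]
  · have : NeZero m := ⟨hm⟩
    rw [← ofReal_measureReal]
    refine ENNReal.ofReal_le_ofReal ?_
    rw [le_div_iff₀' hc, ← integral_blockMean (m := m) hh]
    exact mul_meas_ge_le_integral_of_nonneg (.of_forall fun x => blockMean_nonneg hnn x)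
      (memLp_one_iff_integrable.1 (memLp_blockMean (memLp_one_iff_integrable.2 hh))) c

open ProbabilityTheory

theorem variance_blockMean {f : 𝒳 → ℝ} (hf : MemLp f 2 ν) :
    Var[blockMean f; Measure.pi fun _ : Fin m => ν] = Var[f; ν] / m := by
  have hsum := variance_sum_pi (μ := fun _ : Fin m => ν) (X := fun _ => f) fun _ => hf
  have : blockMean (m := m) f = fun x => (m : ℝ)⁻¹ * (∑ j, fun x : Fin m → 𝒳 => f (x j)) x := by
    ext x
    simp [blockMean, div_eq_inv_mul]
  rw [this, variance_const_mul, hsum]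
  rcases eq_or_ne m 0 with rfl | hm
  · simp only [Nat.cast_zero, inv_zero, zero_pow two_ne_zero, zero_mul, div_zero]
  · rw [Finset.sum_const, Finset.card_univ, Fintype.card_fin, nsmul_eq_mul]
    field_simp

theorem measure_abs_blockMean_sub_integral_ge_le_variance [NeZero m] {f : 𝒳 → ℝ}
    (hf : MemLp f 2 ν) {c : ℝ} (hc : 0 < c) :
    (Measure.pi fun _ : Fin m => ν) {x | c ≤ |blockMean f x - ∫ z, f z ∂ν|} ≤
      ENNReal.ofReal (Var[f; ν] / (m * c ^ 2)) := by
  rw [← integral_blockMean (m := m) (hf.integrable one_le_two), ← div_div, ← variance_blockMean hf]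
  exact meas_ge_le_variance_div_sq (memLp_blockMean hf) hc

end BlockMean

section Deviation

open ProbabilityTheory

variable {𝒳 : Type*} {f : 𝒳 → ℝ} {p A : ℝ}

theorem abs_sub_truncation_le (hp : 1 ≤ p) (hA : 0 < A) (z : 𝒳) :
    |f z - truncation f A z| ≤ A ^ (1 - p) * |f z| ^ p := by
  by_cases hz : |f z| < A
  · rw [truncation_eq_self hz, sub_self, abs_zero]
    positivity
  · have hfz : 0 < |f z| := hA.trans_le (not_lt.1 hz)
    have htrunc : |f z - truncation f A z| ≤ |f z| := by
      by_cases hmem : f z ∈ Set.Ioc (-A) A <;> simp [truncation, Set.indicator, hmem]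
    calc |f z - truncation f A z| ≤ |f z| ^ (1 - p) * |f z| ^ p := by
          rwa [← Real.rpow_add hfz, sub_add_cancel, Real.rpow_one]
      _ ≤ A ^ (1 - p) * |f z| ^ p := by
          gcongr ?_ * _
          exact Real.rpow_le_rpow_of_nonpos hA (not_lt.1 hz) (by linarith)

theorem truncation_sq_le (hp : 0 < p) (hp2 : p ≤ 2) (hA : 0 < A) (z : 𝒳) :
    truncation f A z ^ 2 ≤ A ^ (2 - p) * |f z| ^ p := by
  rcases eq_or_ne (truncation f A z) 0 with h0 | h0
  · rw [h0, sq, zero_mul]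
    positivity
  · have hpos : 0 < |truncation f A z| := abs_pos.2 h0
    calc truncation f A z ^ 2 = |truncation f A z| ^ (2 - p) * |truncation f A z| ^ p := by
          rw [← Real.rpow_add hpos, sub_add_cancel, Real.rpow_two, sq_abs]
      _ ≤ A ^ (2 - p) * |f z| ^ p := by
          have hleA : |truncation f A z| ≤ A :=
            (abs_truncation_le_bound f A z).trans_eq (abs_of_pos hA)
          have hle : |truncation f A z| ≤ |f z| := abs_truncation_le_abs_self f A z
          have : 0 ≤ 2 - p := by linarith
          gcongr

variable [MeasurableSpace 𝒳] {ν : Measure 𝒳}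

theorem integral_abs_sub_truncation_le (hp : 1 ≤ p) (hA : 0 < A)
    (hfp : Integrable (fun z => |f z| ^ p) ν) :
    ∫ z, |f z - truncation f A z| ∂ν ≤ A ^ (1 - p) * ∫ z, |f z| ^ p ∂ν := by
  rw [← integral_const_mul]
  exact integral_mono_of_nonneg (.of_forall fun z => abs_nonneg _) (hfp.const_mul _)
    (.of_forall fun z => abs_sub_truncation_le hp hA z)

theorem variance_truncation_le [IsProbabilityMeasure ν] (hf : AEStronglyMeasurable f ν)
    (hp : 0 < p) (hp2 : p ≤ 2) (hA : 0 < A) (hfp : Integrable (fun z => |f z| ^ p) ν) :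
    Var[truncation f A; ν] ≤ A ^ (2 - p) * ∫ z, |f z| ^ p ∂ν := by
  refine (variance_le_expectation_sq hf.truncation).trans ?_
  rw [← integral_const_mul]
  exact integral_mono_of_nonneg (.of_forall fun z => sq_nonneg _) (hfp.const_mul _)
    (.of_forall fun z => truncation_sq_le hp hp2 hA z)

theorem integrable_abs_rpow (hp : 0 < p) (hf : MemLp f (ENNReal.ofReal p) ν) :
    Integrable (fun z => |f z| ^ p) ν := by
  simpa [ENNReal.toReal_ofReal hp.le] using
    hf.integrable_norm_rpow (by simpa using hp) ENNReal.ofReal_ne_top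

theorem memLp_of_integrable_abs_rpow (hp : 0 < p) (hf : AEStronglyMeasurable f ν)
    (hfp : Integrable (fun z => |f z| ^ p) ν) : MemLp f (ENNReal.ofReal p) ν := by
  rw [← integrable_norm_rpow_iff hf (by simpa using hp) ENNReal.ofReal_ne_top,
    ENNReal.toReal_ofReal hp.le]
  exact hfp

theorem measure_lt_abs_blockMean_sub_integral_le_of_memLp_two [IsProbabilityMeasure ν] {m : ℕ}
    [NeZero m] {g : 𝒳 → ℝ} (hf : Integrable f ν) (hg : MemLp g 2 ν) {t : ℝ} (ht : 0 < t)
    (hfg : ∫ z, |f z - g z| ∂ν ≤ t / 4) :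
    (Measure.pi fun _ : Fin m => ν) {x | t < |blockMean f x - ∫ z, f z ∂ν|} ≤
      ENNReal.ofReal (Var[g; ν] / (m * (t / 2) ^ 2)) +
        ENNReal.ofReal ((∫ z, |f z - g z| ∂ν) / (t / 4)) := by
  have hgi : Integrable g ν := hg.integrable one_le_two
  have hsub : {x : Fin m → 𝒳 | t < |blockMean f x - ∫ z, f z ∂ν|} ⊆
      {x | t / 2 ≤ |blockMean g x - ∫ z, g z ∂ν|} ∪
        {x | t / 4 ≤ blockMean (fun z => |f z - g z|) x} := by
    intro x (hx : t < _)
    by_contra! hgood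
    obtain ⟨hdev, hexcess⟩ : _ < t / 2 ∧ _ < t / 4 := by
      simpa only [Set.mem_union, not_or, Set.mem_ofPred_eq, not_le] using hgood
    have hle := abs_blockMean_sub_integral_le (h := fun z => |f z - g z|) hf hgi
      (hf.sub hgi).abs (fun z => le_rfl) x
    exact hx.not_ge (hle.trans (by linarith))
  calc _ ≤ _ := measure_mono hsub
    _ ≤ _ := measure_union_le _ _
    _ ≤ _ :=
      add_le_add (measure_abs_blockMean_sub_integral_ge_le_variance hg (by positivity))
        (measure_le_blockMean_le (fun z => abs_nonneg _) (hf.sub hgi).abs (by positivity))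

theorem measure_lt_abs_blockMean_sub_integral_le [IsProbabilityMeasure ν] {m : ℕ} [NeZero m]
    (hp : 1 < p) (hp2 : p ≤ 2) (hf : MemLp f (ENNReal.ofReal p) ν) {t : ℝ} (ht : 0 < t) :
    (Measure.pi fun _ : Fin m => ν) {x | t < |blockMean f x - ∫ z, f z ∂ν|} ≤
      ENNReal.ofReal (8 * (m * (∫ z, |f z| ^ p ∂ν) / (m * t) ^ p)) := by
  have hm : (0 : ℝ) < m := Nat.cast_pos.2 (NeZero.pos m)
  have hA : 0 < m * t := by positivity
  have hfi : Integrable f ν := hf.integrable (by simpa using hp.le)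
  have hfp : Integrable (fun z => |f z| ^ p) ν := integrable_abs_rpow (by linarith) hf
  set M := ∫ z, |f z| ^ p ∂ν
  have : 0 ≤ M := integral_nonneg fun z => by positivity
  set q := m * M / (m * t) ^ p with hq
  have : 0 ≤ q := by positivity
  rcases lt_or_ge (1 / 4) q with hlarge | hsmall
  · exact prob_le_one.trans (ENNReal.one_le_ofReal.2 (by linarith))
  set g := truncation f (m * t)
  have hexcess : ∫ z, |f z - g z| ∂ν ≤ q * t := by
    refine (integral_abs_sub_truncation_le hp.le hA hfp).trans_eq ?_
    rw [hq, Real.rpow_sub hA, Real.rpow_one]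
    ring
  have hvar : Var[g; ν] ≤ q * m * t ^ 2 := by
    refine (variance_truncation_le hfi.1 (by linarith) hp2 hA hfp).trans_eq ?_
    rw [hq, Real.rpow_sub hA, Real.rpow_two]
    ring
  calc _ ≤ ENNReal.ofReal (Var[g; ν] / (m * (t / 2) ^ 2)) +
        ENNReal.ofReal ((∫ z, |f z - g z| ∂ν) / (t / 4)) :=
      measure_lt_abs_blockMean_sub_integral_le_of_memLp_two hfi hfi.1.memLp_truncation ht
        (hexcess.trans (by nlinarith))
    _ ≤ ENNReal.ofReal (4 * q) + ENNReal.ofReal (4 * q) := by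
      gcongr
      · rw [div_le_iff₀ (by positivity)]
        linarith
      · rw [div_le_iff₀ (by positivity)]
        linarith
    _ = ENNReal.ofReal (8 * q) := by
      rw [← ENNReal.ofReal_add (by positivity) (by positivity)]
      ring_nf

end Deviation

section ManyBadBlocks

variable {Ω : Type*} [MeasurableSpace Ω] {μ : Measure Ω} [IsProbabilityMeasure μ]

theorem measure_pi_le_ncard_le_choose_mul_pow {ι : Type*} [Fintype ι] (B : Set Ω) (k : ℕ) :
    (Measure.pi fun _ : ι => μ) {Z | k ≤ {i | Z i ∈ B}.ncard} ≤
      (Fintype.card ι).choose k * μ B ^ k := by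
  classical
  have hcover : {Z : ι → Ω | k ≤ {i | Z i ∈ B}.ncard} ⊆
      ⋃ s ∈ Finset.univ.powersetCard k, Set.univ.pi fun i => if i ∈ s then B else Set.univ := by
    intro Z (hZ : k ≤ _)
    obtain ⟨s, hsub, hs⟩ := Finset.exists_subset_card_eq
      (hZ.trans_eq (Set.ncard_eq_toFinset_card' _))
    refine Set.mem_biUnion (x := s) (by simpa using hs) fun i _ => ?_
    by_cases his : i ∈ s
    · simpa [his] using hsub his
    · simp [his]
  calc _ ≤ _ := measure_mono hcover
    _ ≤ ∑ s ∈ Finset.univ.powersetCard k,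
        (Measure.pi fun _ : ι => μ) (Set.univ.pi fun i => if i ∈ s then B else Set.univ) :=
      measure_biUnion_finset_le _ _
    _ = ∑ _s ∈ Finset.univ.powersetCard k, μ B ^ k := by
      refine Finset.sum_congr rfl fun s hs => ?_
      simp [Measure.pi_pi, apply_ite, Finset.prod_ite_mem, (Finset.mem_powersetCard.1 hs).2]
    _ = (Fintype.card ι).choose k * μ B ^ k := by
      rw [Finset.sum_const, Finset.card_powersetCard, Finset.card_univ, nsmul_eq_mul]

theorem measure_pi_le_four_mul_ncard_le_exp {κ : ℕ} {B : Set Ω}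
    (hB : μ B ≤ ENNReal.ofReal (1 / 48)) :
    (Measure.pi fun _ : Fin κ => μ) {Z | κ ≤ 4 * {i | Z i ∈ B}.ncard} ≤
      ENNReal.ofReal (Real.exp (-(κ / 4))) := by
  set k := (κ + 3) / 4
  have hset : {Z : Fin κ → Ω | κ ≤ 4 * {i | Z i ∈ B}.ncard} ⊆ {Z | k ≤ {i | Z i ∈ B}.ncard} :=
    fun Z (hZ : κ ≤ _) => show k ≤ _ by omega
  have hchoose : (κ.choose k : ℝ) ≤ 16 ^ k := by
    have : κ.choose k ≤ 16 ^ k := (Nat.choose_le_two_pow κ k).trans <| by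
      rw [show 16 = 2 ^ 4 by rfl, ← pow_mul]
      exact Nat.pow_le_pow_right two_pos (by omega)
    exact_mod_cast this
  have hreal : (κ.choose k : ℝ) * (1 / 48) ^ k ≤ Real.exp (-(κ / 4)) :=
    calc (κ.choose k : ℝ) * (1 / 48) ^ k ≤ 16 ^ k * (1 / 48) ^ k := by gcongr
      _ = (1 / 3) ^ k := by rw [← mul_pow]; norm_num
      _ ≤ Real.exp (-1) ^ k := by
        rw [Real.exp_neg, ← one_div]
        gcongr
        exact Real.exp_one_lt_three.le
      _ ≤ Real.exp (-(κ / 4)) := by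
        have : (κ : ℝ) ≤ 4 * k := by exact_mod_cast show κ ≤ 4 * k by omega
        rw [← Real.exp_nat_mul, Real.exp_le_exp]
        linarith
  calc _ ≤ _ := measure_mono hset
    _ ≤ κ.choose k * μ B ^ k := by
      simpa using measure_pi_le_ncard_le_choose_mul_pow (ι := Fin κ) B k
    _ ≤ κ.choose k * ENNReal.ofReal (1 / 48) ^ k := by gcongr
    _ = ENNReal.ofReal (κ.choose k * (1 / 48) ^ k) := by
      rw [← ENNReal.ofReal_pow (by norm_num), ENNReal.ofReal_mul (Nat.cast_nonneg _),
        ENNReal.ofReal_natCast]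
    _ ≤ _ := ENNReal.ofReal_le_ofReal hreal

end ManyBadBlocks

section Covering

open Metric Module
open scoped NNReal

variable {E : Type*} [NormedAddCommGroup E] [NormedSpace ℝ E] [FiniteDimensional ℝ E]
  {x : E} {r : ℝ} {ε : ℝ≥0}

theorem card_le_of_isSeparated_of_subset_closedBall (hr : 0 ≤ r) (hε : 0 < ε) {s : Finset E}
    (hs : ↑s ⊆ closedBall x r) (hsep : IsSeparated (ε : ENNReal) (s : Set E)) :
    (s.card : ℝ) ≤ (1 + 2 * r / ε) ^ finrank ℝ E := by
  borelize E
  set μ : Measure E := Measure.addHaar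
  have hε2 : (0 : ℝ) < ε / 2 := by positivity
  have hdisj : (s : Set E).PairwiseDisjoint fun c => ball c (ε / 2 : ℝ) := by
    intro c hc c' hc' hne
    refine ball_disjoint_ball ?_
    have : (ε : ENNReal) < edist c c' := hsep hc hc' hne
    rw [edist_nndist, ENNReal.coe_lt_coe, ← NNReal.coe_lt_coe, coe_nndist] at this
    linarith
  have hsub : ⋃ c ∈ s, ball c (ε / 2 : ℝ) ⊆ ball x (r + ε / 2) :=
    Set.iUnion₂_subset fun c hc => ball_subset_ball' (by linarith [mem_closedBall.1 (hs hc)])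
  have hvol : s.card * ENNReal.ofReal ((ε / 2 : ℝ) ^ finrank ℝ E) * μ (ball 0 1) ≤
      ENNReal.ofReal ((r + ε / 2) ^ finrank ℝ E) * μ (ball 0 1) :=
    calc _ = μ (⋃ c ∈ s, ball c (ε / 2 : ℝ)) := by
          rw [measure_biUnion_finset hdisj fun c _ => measurableSet_ball]
          simp only [μ.addHaar_ball_of_pos _ hε2, Finset.sum_const, nsmul_eq_mul, mul_assoc]
      _ ≤ μ (ball x (r + ε / 2)) := measure_mono hsub
      _ = _ := μ.addHaar_ball_of_pos _ (by positivity)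
  rw [ENNReal.mul_le_mul_iff_left (measure_ball_pos _ _ one_pos).ne' measure_ball_lt_top.ne,
    ← ENNReal.ofReal_natCast, ← ENNReal.ofReal_mul (Nat.cast_nonneg _),
    ENNReal.ofReal_le_ofReal_iff (by positivity), ← le_div_iff₀ (by positivity), ← div_pow] at hvol
  rwa [show 1 + 2 * r / ε = (r + ε / 2) / (ε / 2) by field_simp; ring]

theorem packingNumber_closedBall_le (hr : 0 ≤ r) (hε : 0 < ε) :
    packingNumber ε (closedBall x r) ≤ ⌊(1 + 2 * r / ε) ^ finrank ℝ E⌋₊ := by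
  refine iSup₂_le fun C hC => iSup_le fun hsep => ?_
  by_contra! hlt
  obtain ⟨s, hsC, hs⟩ := Set.exists_subset_encard_eq (Order.add_one_le_of_lt hlt)
  have hfin : s.Finite := Set.finite_of_encard_eq_coe hs
  lift s to Finset E using hfin
  have hcard := Nat.le_floor (card_le_of_isSeparated_of_subset_closedBall hr hε (hsC.trans hC)
    (hsep.subset hsC))
  rw [Set.encard_coe_eq_coe_finsetCard] at hs
  norm_cast at hs
  omega

theorem exists_finset_cover_closedBall (hr : 0 ≤ r) {β : ℝ} (hβ : 0 < β) :
    ∃ s : Finset E, ↑s ⊆ closedBall x r ∧ (∀ w ∈ closedBall x r, ∃ u ∈ s, dist w u ≤ β) ∧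
      (s.card : ℝ) ≤ (1 + 2 * r / β) ^ finrank ℝ E := by
  lift β to ℝ≥0 using hβ.le
  have hle := (coveringNumber_le_packingNumber β (closedBall x r)).trans
    (packingNumber_closedBall_le hr hβ)
  have hne : coveringNumber β (closedBall x r) ≠ ⊤ :=
    ne_top_of_le_ne_top (ENat.natCast_ne_top _) hle
  obtain ⟨s, hs⟩ := (finite_minimalCover (ε := β) (A := closedBall x r)).exists_finset_coe
  refine ⟨s, hs ▸ minimalCover_subset, fun w hw => ?_, ?_⟩
  · obtain ⟨u, hu, hwu⟩ := isCover_minimalCover hne hw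
    refine ⟨u, by rwa [← hs, Finset.mem_coe] at hu, ?_⟩
    rwa [← edist_le_ofReal β.coe_nonneg, ENNReal.ofReal_coe_nnreal]
  · rw [← encard_minimalCover hne, ← hs, Set.encard_coe_eq_coe_finsetCard, Nat.cast_le] at hle
    exact (Nat.cast_le.2 hle).trans (Nat.floor_le (by positivity))

end Covering

section UniformConvergence

variable {𝒳 : Type*} [MeasurableSpace 𝒳] {ν : Measure 𝒳} {m κ : ℕ} {h : 𝒳 → ℝ} {ε δ : ℝ}

theorem abs_mom_sub_integral_le {f g : 𝒳 → ℝ} (hf : Integrable f ν) (hg : Integrable g ν)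
    (hh : Integrable h ν) (hfg : ∀ z, |f z - g z| ≤ h z) (hhε : 4 * ∫ z, h z ∂ν ≤ ε)
    {Z : Fin κ → Fin m → 𝒳} (hhZ : 4 * {i | ε / 4 ≤ blockMean h (Z i)}.ncard < κ)
    (hgZ : 4 * {i | ε / 2 < |blockMean g (Z i) - ∫ z, g z ∂ν|}.ncard < κ) :
    |mom f Z - ∫ z, f z ∂ν| ≤ ε := by
  rw [abs_sub_comm, Set.mem_Icc_iff_abs_le]
  refine median_mem_of_ordConnected ?_
  have hsub : {i | blockMean f (Z i) ∉ Set.Icc (∫ z, f z ∂ν - ε) (∫ z, f z ∂ν + ε)} ⊆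
      {i | ε / 4 ≤ blockMean h (Z i)} ∪ {i | ε / 2 < |blockMean g (Z i) - ∫ z, g z ∂ν|} := by
    intro i (hi : _ ∉ _)
    rw [← Set.mem_Icc_iff_abs_le, abs_sub_comm] at hi
    by_contra! hgood
    obtain ⟨hhi, hgi⟩ : _ < ε / 4 ∧ _ ≤ ε / 2 := by
      simpa only [Set.mem_union, not_or, Set.mem_ofPred_eq, not_le, not_lt] using hgood
    have hle := abs_blockMean_sub_integral_le hf hg hh hfg (Z i)
    exact hi (hle.trans (by linarith))
  have hcard := (Set.ncard_le_ncard hsub).trans (Set.ncard_union_le _ _)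
  omega

theorem ofReal_one_sub_le_measure_of_measure_compl_le [IsProbabilityMeasure ν] {G : Set 𝒳}
    (hδ : 0 ≤ δ) (hG : ν Gᶜ ≤ ENNReal.ofReal δ) : ENNReal.ofReal (1 - δ) ≤ ν G := by
  rw [ENNReal.ofReal_sub _ hδ, ENNReal.ofReal_one, tsub_le_iff_right, ← measure_univ (μ := ν),
    ← Set.union_compl_self G]
  exact (measure_union_le _ _).trans (by gcongr)

theorem ofReal_one_sub_le_measure_of_cover [IsProbabilityMeasure ν] {ℱ : Set (𝒳 → ℝ)}
    {𝒞 : Finset (𝒳 → ℝ)} (hℱ : ∀ f ∈ ℱ, Integrable f ν) (h𝒞 : ∀ g ∈ 𝒞, Integrable g ν)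
    (hnn : ∀ z, 0 ≤ h z) (hh : Integrable h ν)
    (hcover : ∀ f ∈ ℱ, ∃ g ∈ 𝒞, ∀ z, |f z - g z| ≤ h z)
    (hε : 0 < ε) (hhε : 192 * ∫ z, h z ∂ν ≤ ε)
    (hdev : ∀ g ∈ 𝒞, (Measure.pi fun _ : Fin m => ν)
      {x | ε / 2 < |blockMean g x - ∫ z, g z ∂ν|} ≤ ENNReal.ofReal (1 / 48))
    (hδ : (𝒞.card + 1) * Real.exp (-(κ / 4)) ≤ δ) :
    ENNReal.ofReal (1 - δ) ≤ (Measure.pi fun _ : Fin κ => Measure.pi fun _ : Fin m => ν)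
      {Z | ∀ f ∈ ℱ, |mom f Z - ∫ z, f z ∂ν| ≤ ε} := by
  set P := Measure.pi fun _ : Fin κ => Measure.pi fun _ : Fin m => ν
  set G := {Z : Fin κ → Fin m → 𝒳 | ∀ f ∈ ℱ, |mom f Z - ∫ z, f z ∂ν| ≤ ε}
  set many : Set (Fin m → 𝒳) → Set (Fin κ → Fin m → 𝒳) := fun B =>
    {Z | κ ≤ 4 * {i | Z i ∈ B}.ncard}
  set H : Set (Fin m → 𝒳) := {x | ε / 4 ≤ blockMean h x}
  set D : (𝒳 → ℝ) → Set (Fin m → 𝒳) := fun g => {x | ε / 2 < |blockMean g x - ∫ z, g z ∂ν|}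
  have : 0 ≤ ∫ z, h z ∂ν := integral_nonneg hnn
  have hH : (Measure.pi fun _ : Fin m => ν) H ≤ ENNReal.ofReal (1 / 48) := by
    refine (measure_le_blockMean_le hnn hh (by positivity)).trans (ENNReal.ofReal_le_ofReal ?_)
    rw [div_le_iff₀ (by positivity)]
    linarith
  have hsub : Gᶜ ⊆ many H ∪ ⋃ g ∈ 𝒞, many (D g) := by
    rw [Set.compl_subset_comm]
    intro Z hZ f hf
    obtain ⟨hZH, hZD⟩ : 4 * {i | Z i ∈ H}.ncard < κ ∧ ∀ g ∈ 𝒞, 4 * {i | Z i ∈ D g}.ncard < κ := by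
      simpa [many] using hZ
    obtain ⟨g, hg, hfg⟩ := hcover f hf
    exact abs_mom_sub_integral_le (hℱ f hf) (h𝒞 g hg) hh hfg (by linarith) hZH (hZD g hg)
  have hbad : P Gᶜ ≤ ENNReal.ofReal δ :=
    calc P Gᶜ ≤ P (many H ∪ ⋃ g ∈ 𝒞, many (D g)) := measure_mono hsub
      _ ≤ P (many H) + ∑ g ∈ 𝒞, P (many (D g)) :=
        (measure_union_le _ _).trans (by gcongr; exact measure_biUnion_finset_le _ _)
      _ ≤ ENNReal.ofReal (Real.exp (-(κ / 4))) +
          ∑ g ∈ 𝒞, ENNReal.ofReal (Real.exp (-(κ / 4))) := by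
        gcongr with g hg
        · exact measure_pi_le_four_mul_ncard_le_exp hH
        · exact measure_pi_le_four_mul_ncard_le_exp (hdev g hg)
      _ = ENNReal.ofReal ((𝒞.card + 1) * Real.exp (-(κ / 4))) := by
        rw [Finset.sum_const, nsmul_eq_mul, ENNReal.ofReal_mul (by positivity), add_comm,
          ENNReal.ofReal_add (by positivity) zero_le_one, ENNReal.ofReal_natCast,
          ENNReal.ofReal_one, add_mul, one_mul]
      _ ≤ ENNReal.ofReal δ := ENNReal.ofReal_le_ofReal hδ
  exact ofReal_one_sub_le_measure_of_measure_compl_le (le_trans (by positivity) hδ) hbad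

end UniformConvergence

section LinearLoss

open scoped NNReal RealInnerProductSpace

variable {E : Type*} [NormedAddCommGroup E] [InnerProductSpace ℝ E]

/-- The loss `(x, y) ↦ ℓ(⟨w, x⟩ - y)` of the linear predictor `w`, over an arbitrary real inner
product space. -/
def linLoss (ℓ : ℝ → ℝ) (w : E) (z : E × ℝ) : ℝ :=
  ℓ (⟪w, z.1⟫ - z.2)

variable {ℓ : ℝ → ℝ} {L : ℝ≥0} {w : E}

theorem abs_linLoss_sub_linLoss_le (hℓ : LipschitzWith L ℓ) (w u : E) (z : E × ℝ) :
    |linLoss ℓ w z - linLoss ℓ u z| ≤ L * dist w u * ‖z.1‖ :=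
  calc |linLoss ℓ w z - linLoss ℓ u z| ≤ L * |⟪w, z.1⟫ - z.2 - (⟪u, z.1⟫ - z.2)| :=
        hℓ.dist_le_mul _ _
    _ = L * |⟪w - u, z.1⟫| := by rw [sub_sub_sub_cancel_right, inner_sub_left]
    _ ≤ L * (dist w u * ‖z.1‖) := by
        rw [dist_eq_norm]
        gcongr
        exact abs_real_inner_le_norm _ _
    _ = L * dist w u * ‖z.1‖ := (mul_assoc _ _ _).symm

theorem two_mul_abs_linLoss_rpow_le (hℓ : LipschitzWith L ℓ) (hℓ0 : ℓ 0 = 0) {p : ℝ} (hp : 1 ≤ p)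
    (w : E) (z : E × ℝ) :
    2 * |linLoss ℓ w z| ^ p ≤ (2 * L) ^ p * (|⟪w, z.1⟫| ^ p + |z.2| ^ p) := by
  have hle : |linLoss ℓ w z| ≤ L * (|⟪w, z.1⟫| + |z.2|) := by
    have := hℓ.dist_le_mul (⟪w, z.1⟫ - z.2) 0
    rw [hℓ0, Real.dist_eq, Real.dist_eq, sub_zero, sub_zero] at this
    exact this.trans (by gcongr; exact abs_sub _ _)
  have hconvex : (|⟪w, z.1⟫| + |z.2|) ^ p ≤ 2 ^ (p - 1) * (|⟪w, z.1⟫| ^ p + |z.2| ^ p) := by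
    exact_mod_cast NNReal.rpow_add_le_mul_rpow_add_rpow ‖⟪w, z.1⟫‖₊ ‖z.2‖₊ hp
  calc 2 * |linLoss ℓ w z| ^ p ≤ 2 * (L * (|⟪w, z.1⟫| + |z.2|)) ^ p := by gcongr
    _ = 2 * L ^ p * (|⟪w, z.1⟫| + |z.2|) ^ p := by
        rw [Real.mul_rpow L.coe_nonneg (by positivity), mul_assoc]
    _ ≤ 2 * L ^ p * (2 ^ (p - 1) * (|⟪w, z.1⟫| ^ p + |z.2| ^ p)) := by gcongr
    _ = (2 * L) ^ p * (|⟪w, z.1⟫| ^ p + |z.2| ^ p) := by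
        rw [Real.mul_rpow two_pos.le L.coe_nonneg, Real.rpow_sub_one two_ne_zero]
        ring

variable [MeasurableSpace E] {ν : Measure (E × ℝ)}

theorem memLp_linLoss (hℓ : LipschitzWith L ℓ) (hℓ0 : ℓ 0 = 0) {q : ENNReal}
    (hX : MemLp id q ν.fst) (hY : MemLp id q ν.snd) (w : E) : MemLp (linLoss ℓ w) q ν := by
  have hfst : MemLp Prod.fst q ν := hX.comp_measurePreserving ⟨measurable_fst, rfl⟩
  have hsnd : MemLp Prod.snd q ν := hY.comp_measurePreserving ⟨measurable_snd, rfl⟩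
  exact hℓ.comp_memLp hℓ0 ((hfst.const_inner w).sub hsnd)

theorem two_mul_integral_abs_linLoss_rpow_le (hℓ : LipschitzWith L ℓ) (hℓ0 : ℓ 0 = 0) {p : ℝ}
    (hp : 1 ≤ p) (hX : Integrable (fun x => |⟪w, x⟫| ^ p) ν.fst)
    (hY : Integrable (fun y => |y| ^ p) ν.snd) :
    2 * ∫ z, |linLoss ℓ w z| ^ p ∂ν ≤
      (2 * L) ^ p * ((∫ x, |⟪w, x⟫| ^ p ∂ν.fst) + ∫ y, |y| ^ p ∂ν.snd) := by
  have hXν : Integrable (fun z => |⟪w, z.1⟫| ^ p) ν := hX.comp_measurable measurable_fst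
  have hYν : Integrable (fun z => |z.2| ^ p) ν := hY.comp_measurable measurable_snd
  rw [Measure.fst, integral_map measurable_fst.aemeasurable hX.1, Measure.snd,
    integral_map measurable_snd.aemeasurable hY.1, ← integral_const_mul, ← integral_add hXν hYν,
    ← integral_const_mul]
  exact integral_mono_of_nonneg (.of_forall fun z => by positivity) ((hXν.add hYν).const_mul _)
    (.of_forall fun z => two_mul_abs_linLoss_rpow_le hℓ hℓ0 hp w z)

theorem ofReal_one_sub_le_measure_linLoss [IsProbabilityMeasure ν] (hℓ : LipschitzWith L ℓ)
    (hℓ0 : ℓ 0 = 0) {p : ℝ} (hp : 1 < p) (hp2 : p ≤ 2) (hX : MemLp id (ENNReal.ofReal p) ν.fst)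
    (hY : MemLp id (ENNReal.ofReal p) ν.snd) {m κ : ℕ} [NeZero m] {ε δ β : ℝ} (hε : 0 < ε)
    (hβ : 0 ≤ β) {S : Set E} {s : Finset E} (hs : ↑s ⊆ S) (hcover : ∀ w ∈ S, ∃ u ∈ s, dist w u ≤ β)
    (hnorm : 192 * (L * β * ∫ x, ‖x‖ ∂ν.fst) ≤ ε)
    (hmom : ∀ w ∈ S, 384 * ∫ z, |linLoss ℓ w z| ^ p ∂ν ≤ m ^ (p - 1) * (ε / 2) ^ p)
    (hδ : (s.card + 1) * Real.exp (-(κ / 4)) ≤ δ) :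
    ENNReal.ofReal (1 - δ) ≤ (Measure.pi fun _ : Fin κ => Measure.pi fun _ : Fin m => ν)
      {Z | ∀ f ∈ linLoss ℓ '' S, |mom f Z - ∫ z, f z ∂ν| ≤ ε} := by
  classical
  have hp1 : 1 ≤ ENNReal.ofReal p := by simpa using hp.le
  have hint (w : E) : Integrable (linLoss ℓ w) ν := (memLp_linLoss hℓ hℓ0 hX hY w).integrable hp1
  have hXnorm : Integrable (fun x : E => ‖x‖) ν.fst := (hX.integrable hp1).norm
  refine ofReal_one_sub_le_measure_of_cover (𝒞 := s.image (linLoss ℓ))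
    (h := fun z => L * β * ‖z.1‖) (Set.forall_mem_image.2 fun w _ => hint w)
    (Finset.forall_mem_image.2 fun u _ => hint u) (fun z => by positivity)
    ((hXnorm.comp_measurable measurable_fst).const_mul _) ?cover hε ?norm ?dev ?card
  case cover =>
    refine Set.forall_mem_image.2 fun w hw => ?_
    obtain ⟨u, hu, hwu⟩ := hcover w hw
    refine ⟨_, Finset.mem_image_of_mem _ hu, fun z => ?_⟩
    exact (abs_linLoss_sub_linLoss_le hℓ w u z).trans (by gcongr)
  case norm =>
    rwa [Measure.fst, integral_map measurable_fst.aemeasurable hXnorm.1,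
      ← integral_const_mul] at hnorm
  case dev =>
    refine Finset.forall_mem_image.2 fun u hu => ?_
    have hm : (0 : ℝ) < m := Nat.cast_pos.2 (NeZero.pos m)
    refine (measure_lt_abs_blockMean_sub_integral_le hp hp2 (memLp_linLoss hℓ hℓ0 hX hY u)
      (half_pos hε)).trans (ENNReal.ofReal_le_ofReal ?_)
    rw [← mul_div_assoc, div_le_iff₀ (by positivity)]
    calc 8 * (m * ∫ z, |linLoss ℓ u z| ^ p ∂ν)
        = 1 / 48 * (m * (384 * ∫ z, |linLoss ℓ u z| ^ p ∂ν)) := by ring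
      _ ≤ 1 / 48 * (m * (m ^ (p - 1) * (ε / 2) ^ p)) := by
        gcongr 1 / 48 * (m * ?_)
        exact hmom u (hs hu)
      _ = 1 / 48 * (m * (ε / 2)) ^ p := by
        rw [Real.mul_rpow hm.le (by positivity), ← mul_assoc (m : ℝ), ← Real.rpow_one_add' hm.le,
          add_sub_cancel]
        linarith
  case card =>
    refine le_trans ?_ hδ
    gcongr
    exact Finset.card_image_le

end LinearLoss

section EuclideanLinearLoss

open scoped RealInnerProductSpace

variable {ι : Type*} [Fintype ι]

theorem real_inner_euclideanSpace_eq_sum (w x : EuclideanSpace ℝ ι) : ⟪w, x⟫ = ∑ i, w i * x i := by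
  simp only [PiLp.inner_apply, RCLike.inner_apply, conj_trivial, mul_comm]

theorem linRegClass_eq_image_linLoss (d : ℕ) (ℓ : ℝ → ℝ) (W : ℝ) :
    linRegClass d ℓ W = linLoss ℓ '' Metric.closedBall (0 : EuclideanSpace ℝ (Fin d)) W := by
  ext f
  simp only [linRegClass, Set.mem_ofPred_eq, Set.mem_image, mem_closedBall_zero_iff,
    ← real_inner_euclideanSpace_eq_sum, eq_comm (a := f)]
  rfl

theorem norm_euclideanSpace_le_sum_abs (x : EuclideanSpace ℝ ι) : ‖x‖ ≤ ∑ i, |x i| := by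
  set b := EuclideanSpace.basisFun ι ℝ
  calc ‖x‖ = ‖∑ i, b.repr x i • b i‖ := by rw [b.sum_repr]
    _ ≤ ∑ i, ‖b.repr x i • b i‖ := norm_sum_le _ _
    _ = ∑ i, |x i| := by simp [b, norm_smul]

variable {Ω : Type*} [MeasurableSpace Ω] {μ : Measure Ω} {p : ℝ}

theorem memLp_euclideanSpace_of_integrable_abs_inner_rpow {X : Ω → EuclideanSpace ℝ ι}
    (hX : AEStronglyMeasurable X μ) (hp : 0 < p) {W : ℝ} (hW : 0 < W)
    (hXp : ∀ w ∈ Metric.closedBall 0 W, Integrable (fun ω => |⟪w, X ω⟫| ^ p) μ) :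
    MemLp X (ENNReal.ofReal p) μ := by
  classical
  refine MemLp.of_eval_piLp fun i => ?_
  have hmem := memLp_of_integrable_abs_rpow hp (hX.const_inner (c := EuclideanSpace.single i W)) <|
    hXp (EuclideanSpace.single i W) (by simp [abs_of_pos hW])
  simpa [EuclideanSpace.inner_single_left, hW.ne'] using hmem.const_mul W⁻¹

theorem integral_norm_euclideanSpace_le {X : Ω → EuclideanSpace ℝ ι} (hX : Integrable X μ) :
    ∫ ω, ‖X ω‖ ∂μ ≤ ∫ ω, ∑ i, |X ω i| ∂μ :=
  integral_mono hX.norm (integrable_finsetSum _ fun i _ => (hX.eval_piLp i).abs)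
    fun ω => norm_euclideanSpace_le_sum_abs (X ω)

end EuclideanLinearLoss

section EmptyBlocks

variable {𝒳 : Type*} {κ : ℕ}

theorem median_zero : median (fun _ : Fin κ => 0) = 0 := by
  rcases Nat.eq_zero_or_pos κ with rfl | hκ
  · simp [median]
  · rw [median_eq_apply_sort hκ]

theorem mom_eq_integral_of_integral_abs_rpow_nonpos [MeasurableSpace 𝒳] {ν : Measure 𝒳}
    {f : 𝒳 → ℝ} {p : ℝ} (hp : 0 < p) (hfp : Integrable (fun z => |f z| ^ p) ν)
    (h0 : ∫ z, |f z| ^ p ∂ν ≤ 0) (Z : Fin κ → Fin 0 → 𝒳) : mom f Z = ∫ z, f z ∂ν := by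
  have hnn : ∀ z, 0 ≤ |f z| ^ p := fun z => by positivity
  have hae := (integral_eq_zero_iff_of_nonneg hnn hfp).1 (h0.antisymm (integral_nonneg hnn))
  have hf : f =ᵐ[ν] 0 := hae.mono fun z hz =>
    abs_eq_zero.1 ((Real.rpow_eq_zero (abs_nonneg _) hp.ne').1 hz)
  rw [integral_eq_zero_of_ae hf]
  simp only [mom, blockMean, Nat.cast_zero, div_zero, median_zero]

theorem ofReal_one_sub_le_measure_of_integral_abs_rpow_nonpos [MeasurableSpace 𝒳] {ν : Measure 𝒳}
    [IsProbabilityMeasure ν] {ℱ : Set (𝒳 → ℝ)} {p ε δ : ℝ} (hp : 0 < p)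
    (hfp : ∀ f ∈ ℱ, Integrable (fun z => |f z| ^ p) ν) (h0 : ∀ f ∈ ℱ, ∫ z, |f z| ^ p ∂ν ≤ 0)
    (hε : 0 ≤ ε) (hδ : 0 ≤ δ) :
    ENNReal.ofReal (1 - δ) ≤ (Measure.pi fun _ : Fin κ => Measure.pi fun _ : Fin 0 => ν)
      {Z | ∀ f ∈ ℱ, |mom f Z - ∫ z, f z ∂ν| ≤ ε} := by
  have hgood (Z : Fin κ → Fin 0 → 𝒳) (f) (hf : f ∈ ℱ) : |mom f Z - ∫ z, f z ∂ν| ≤ ε := by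
    rwa [mom_eq_integral_of_integral_abs_rpow_nonpos hp (hfp f hf) (h0 f hf), sub_self, abs_zero]
  rw [Set.eq_univ_of_forall (s := {Z | _}) hgood, measure_univ, ENNReal.ofReal_le_one]
  linarith

end EmptyBlocks

section SampleSize

theorem le_rpow_sub_one_mul_rpow_of_rpow_le {x y ε p : ℝ} (hp : 1 < p) (hx : 0 ≤ x) (hy : 0 ≤ y)
    (hε : 0 < ε) (h : (x / ε ^ p) ^ (1 / (p - 1)) ≤ y) : x ≤ y ^ (p - 1) * ε ^ p := by
  rwa [one_div, Real.rpow_inv_le_iff_of_pos (by positivity) hy (by linarith),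
    div_le_iff₀ (by positivity)] at h

theorem mul_exp_neg_le_of_log_div_le {N δ t : ℝ} (hN : 0 < N) (hδ : 0 < δ)
    (h : Real.log (N / δ) ≤ t) : N * Real.exp (-t) ≤ δ := by
  rwa [Real.log_le_iff_le_exp (by positivity), div_le_iff₀' hδ, ← div_le_iff₀ (Real.exp_pos t),
    div_eq_mul_inv, ← Real.exp_neg] at h

theorem exp_neg_le_half_of_log_le {δ : ℝ} (hδ : 0 < δ) {κ : ℕ}
    (hκ : 4 * 1250 ^ 2 * Real.log (Real.exp 1 / (δ / 8)) ≤ κ) :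
    Real.exp (-(κ / 4)) ≤ δ / 2 := by
  have hlog : Real.log (Real.exp 1 / (δ / 8)) ≤ κ / 4 := by
    have : (0 : ℝ) ≤ κ := Nat.cast_nonneg κ
    linarith
  have hle := mul_exp_neg_le_of_log_div_le (Real.exp_pos 1) (by positivity) hlog
  have := le_mul_of_one_le_left (Real.exp_pos (-(κ / 4 : ℝ))).le (Real.one_le_exp zero_le_one)
  linarith

theorem mul_le_rpow_sub_one_mul_half_rpow {p v M ε y : ℝ} (hp : 1 < p) (hε : 0 < ε)
    (hM : 0 ≤ M) (hMv : 2 * M ≤ v) (hy : 0 ≤ y)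
    (hvy : (400 * (16 : ℝ) ^ p * v / ε ^ p) ^ (1 / (p - 1)) ≤ y) :
    384 * M ≤ y ^ (p - 1) * (ε / 2) ^ p := by
  have hv : 0 ≤ v := by linarith
  have h16 : (2 : ℝ) ^ p ≤ 16 ^ p :=
    Real.rpow_le_rpow two_pos.le (by norm_num) (by linarith)
  rw [Real.div_rpow hε.le two_pos.le, ← mul_div_assoc, le_div_iff₀ (by positivity)]
  calc 384 * M * 2 ^ p = 192 * 2 ^ p * (2 * M) := by ring
    _ ≤ 400 * 16 ^ p * v := by gcongr; norm_num
    _ ≤ y ^ (p - 1) * ε ^ p := le_rpow_sub_one_mul_rpow_of_rpow_le hp (by positivity) hy hε hvy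

theorem mul_mul_le_of_mul_le {L β I S T y ε : ℝ} (hL : 0 ≤ L) (hβ : 0 ≤ β) (hS : 0 ≤ S) (hT : 0 ≤ T)
    (hIS : I ≤ S) (hy : 1 ≤ y) (h : β * (60000 * L * (S + T) * y) ≤ ε / 16) :
    192 * (L * β * I) ≤ ε := by
  have hle : I ≤ (S + T) * y :=
    (le_add_of_le_of_nonneg hIS hT).trans (le_mul_of_one_le_right (by positivity) hy)
  have hscale : L * β * I ≤ L * β * ((S + T) * y) := by gcongr
  have hnonneg : 0 ≤ L * β * ((S + T) * y) := by positivity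
  linarith

open Metric Module

theorem exists_finset_cover_closedBall_mul_exp_neg_le {E : Type*} [NormedAddCommGroup E]
    [NormedSpace ℝ E] [FiniteDimensional ℝ E] {d : ℕ} (hd : finrank ℝ E = d)
    {W ε δ A : ℝ} {κ : ℕ} (hW : 0 < W) (hε : 0 < ε) (hδ : 0 < δ) (hA : 0 ≤ A)
    (hκ : Real.exp (-(κ / 4)) ≤ δ / 2)
    (hκN : 50 * Real.log (8 * ((6 * W / min (W / 2) (ε / 16 / A)) ^ d) / δ) ≤ κ) :
    ∃ (s : Finset E) (β : ℝ), (s : Set E) ⊆ closedBall 0 W ∧ 0 ≤ β ∧ β * A ≤ ε / 16 ∧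
      (∀ w ∈ closedBall 0 W, ∃ u ∈ s, dist w u ≤ β) ∧
      (s.card + 1) * Real.exp (-(κ / 4)) ≤ δ := by
  subst hd
  rcases hA.eq_or_lt with rfl | hA
  -- The scale `ε / 16 / A` is then the junk value `0`, but a single centre is enough.
  · refine ⟨{0}, W, by simpa using hW.le, hW.le, by linarith, fun w hw => ⟨0, by simp, hw⟩, ?_⟩
    rw [Finset.card_singleton, Nat.cast_one]
    linarith
  set β := min (W / 2) (ε / 16 / A)
  have hβ : 0 < β := lt_min (by positivity) (by positivity)
  obtain ⟨s, hsW, hcover, hcard⟩ := exists_finset_cover_closedBall (x := (0 : E)) hW.le hβ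
  refine ⟨s, β, hsW, hβ.le, (le_div_iff₀ hA).1 (min_le_right _ _), hcover, ?_⟩
  set N := (6 * W / β) ^ finrank ℝ E
  have : 0 < N := by positivity
  have hsN : (s.card : ℝ) ≤ N := by
    refine hcard.trans (pow_le_pow_left₀ (by positivity) ?_ _)
    rw [le_div_iff₀ hβ, add_mul, div_mul_cancel₀ _ hβ.ne']
    linarith [min_le_left (W / 2) (ε / 16 / A)]
  have hexp : 8 * N * Real.exp (-(κ / 4)) ≤ δ := by
    have : (0 : ℝ) ≤ κ := Nat.cast_nonneg κ
    exact mul_exp_neg_le_of_log_div_le (by positivity) hδ (by linarith)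
  have : s.card * Real.exp (-(κ / 4)) ≤ N * Real.exp (-(κ / 4)) := by gcongr
  linarith

end SampleSize

theorem regression_mom_uniform_convergence_lipschitz_general (d : ℕ) (ℓ : ℝ → ℝ) (L : ℝ)
    (hlip : ∀ x y : ℝ, |ℓ x - ℓ y| ≤ L * |x - y|) (hℓ0 : ℓ 0 = 0)
    (W : ℝ) (hW : 0 < W)
    (𝒟 : Measure (EuclideanSpace ℝ (Fin d) × ℝ)) [IsProbabilityMeasure 𝒟]
    (p : ℝ) (hp1 : 1 < p) (hp2 : p ≤ 2)
    (v : ℝ)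
    (hXp : ∀ w : EuclideanSpace ℝ (Fin d), ‖w‖ ≤ W →
      Integrable (fun x => |∑ i, w i * x i| ^ p) 𝒟.fst)
    (hYp : Integrable (fun y => |y| ^ p) 𝒟.snd)
    (hv : ∀ w : EuclideanSpace ℝ (Fin d), ‖w‖ ≤ W →
      (2 * L) ^ p * ((∫ x, |∑ i, w i * x i| ^ p ∂𝒟.fst) + ∫ y, |y| ^ p ∂𝒟.snd) ≤ v)
    (ε δ : ℝ) (hε : 0 < ε) (hδ0 : 0 < δ)
    (m κ : ℕ)
    (hm : (400 * (16 : ℝ) ^ p * v / ε ^ p) ^ (1 / (p - 1)) ≤ (m : ℝ))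
    (hκ0 : 4 * 1250 ^ 2 * Real.log (Real.exp 1 / (δ / 8)) ≤ (κ : ℝ))
    (hκ2 : 50 * Real.log (8 *
        ((6 * W / min (W / 2)
            ((ε / 16) /
              (60000 * L * ((∫ x, ∑ i, |x i| ∂𝒟.fst) + ∫ y, |y| ∂𝒟.snd) * m))) ^ d) / δ)
      ≤ (κ : ℝ)) :
    ENNReal.ofReal (1 - δ) ≤
      (Measure.pi fun _ : Fin κ => Measure.pi fun _ : Fin m => 𝒟)
        {Z | ∀ f ∈ linRegClass d ℓ W, |mom f Z - ∫ z, f z ∂𝒟| ≤ ε} := by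
  lift L to NNReal using by simpa using (abs_nonneg _).trans (hlip 1 0)
  have hℓ : LipschitzWith L ℓ := .of_dist_le_mul hlip
  have hp0 : 0 < p := by linarith
  simp only [← real_inner_euclideanSpace_eq_sum, ← mem_closedBall_zero_iff] at hXp hv
  have hX : MemLp id (ENNReal.ofReal p) 𝒟.fst :=
    memLp_euclideanSpace_of_integrable_abs_inner_rpow aestronglyMeasurable_id hp0 hW hXp
  have hY : MemLp id (ENNReal.ofReal p) 𝒟.snd :=
    memLp_of_integrable_abs_rpow hp0 aestronglyMeasurable_id hYp
  have hmom (w : EuclideanSpace ℝ (Fin d)) (hw : w ∈ Metric.closedBall 0 W) :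
      384 * ∫ z, |linLoss ℓ w z| ^ p ∂𝒟 ≤ m ^ (p - 1) * (ε / 2) ^ p :=
    mul_le_rpow_sub_one_mul_half_rpow hp1 hε (by positivity)
      ((two_mul_integral_abs_linLoss_rpow_le hℓ hℓ0 hp1.le (hXp w hw) hYp).trans (hv w hw))
      m.cast_nonneg hm
  rw [linRegClass_eq_image_linLoss]
  rcases Nat.eq_zero_or_pos m with rfl | hm0
  · simp only [Nat.cast_zero, Real.zero_rpow (sub_ne_zero.2 hp1.ne'), zero_mul] at hmom
    exact ofReal_one_sub_le_measure_of_integral_abs_rpow_nonpos hp0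
      (Set.forall_mem_image.2 fun w _ => integrable_abs_rpow hp0 (memLp_linLoss hℓ hℓ0 hX hY w))
      (Set.forall_mem_image.2 fun w hw => by linarith [hmom w hw]) hε.le hδ0.le
  have : NeZero m := ⟨hm0.ne'⟩
  set SX := ∫ x, ∑ i, |x i| ∂𝒟.fst
  set SY := ∫ y, |y| ∂𝒟.snd
  have hSX : ∫ x, ‖x‖ ∂𝒟.fst ≤ SX :=
    integral_norm_euclideanSpace_le (hX.integrable (by simpa using hp1.le))
  obtain ⟨s, β, hs, hβ, hβA, hcover, hcard⟩ :=
    exists_finset_cover_closedBall_mul_exp_neg_le finrank_euclideanSpace_fin hW hε hδ0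
      (by positivity) (exp_neg_le_half_of_log_le hδ0 hκ0) hκ2
  have hnorm : 192 * (L * β * ∫ x, ‖x‖ ∂𝒟.fst) ≤ ε :=
    mul_mul_le_of_mul_le L.coe_nonneg hβ (by positivity) (by positivity) hSX
      (Nat.one_le_cast.2 hm0) hβA
  exact ofReal_one_sub_le_measure_linLoss hℓ hℓ0 hp1 hp2 hX hY hε hβ hs hcover hnorm hmom hcard

/-- Uniform MoM estimation for linear regression with an `L`-Lipschitz loss `ℓ` with
`ℓ(0) = 0`: with probability at least `1 - δ` over `Z ∼ (𝒟^m)^κ`, `𝒟 = 𝒟_X × 𝒟_Y`,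
every `f ∈ ℱ_W` satisfies `|MoM(f,Z) - E[f]| ≤ ε`. -/
theorem regression_mom_uniform_convergence_lipschitz (d : ℕ) (ℓ : ℝ → ℝ) (L : ℝ)
    (hnn : ∀ t, 0 ≤ ℓ t) (hlip : ∀ x y : ℝ, |ℓ x - ℓ y| ≤ L * |x - y|) (hℓ0 : ℓ 0 = 0)
    (W : ℝ) (hW : 0 < W)
    (𝒟X : Measure (EuclideanSpace ℝ (Fin d))) [IsProbabilityMeasure 𝒟X]
    (𝒟Y : Measure ℝ) [IsProbabilityMeasure 𝒟Y]
    (hX1 : Integrable (fun x => ∑ i, |x i|) 𝒟X)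
    (hY1 : Integrable (fun y => |y|) 𝒟Y)
    (p : ℝ) (hp1 : 1 < p) (hp2 : p ≤ 2)
    (v : ℝ)
    (hXp : ∀ w : EuclideanSpace ℝ (Fin d), ‖w‖ ≤ W →
      Integrable (fun x => |∑ i, w i * x i| ^ p) 𝒟X)
    (hYp : Integrable (fun y => |y| ^ p) 𝒟Y)
    (hv : ∀ w : EuclideanSpace ℝ (Fin d), ‖w‖ ≤ W →
      (2 * L) ^ p * ((∫ x, |∑ i, w i * x i| ^ p ∂𝒟X) + ∫ y, |y| ^ p ∂𝒟Y) ≤ v)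
    (ε δ : ℝ) (hε : 0 < ε) (hδ0 : 0 < δ) (hδ1 : δ < 1)
    (m κ : ℕ)
    (hm : (400 * (16 : ℝ) ^ p * v / ε ^ p) ^ (1 / (p - 1)) ≤ (m : ℝ))
    (hκ0 : 4 * 1250 ^ 2 * Real.log (Real.exp 1 / (δ / 8)) ≤ (κ : ℝ))
    (hκ1 : 10 ^ 6 * Real.log 2 / 99 ≤ (κ : ℝ))
    (hκ2 : 50 * Real.log (8 *
        ((6 * W / min (W / 2)
            ((ε / 16) /
              (60000 * L * ((∫ x, ∑ i, |x i| ∂𝒟X) + ∫ y, |y| ∂𝒟Y) * m))) ^ d) / δ)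
      ≤ (κ : ℝ)) :
    ENNReal.ofReal (1 - δ) ≤
      (Measure.pi fun _ : Fin κ => Measure.pi fun _ : Fin m => 𝒟X.prod 𝒟Y)
        {Z | ∀ f ∈ linRegClass d ℓ W, |mom f Z - ∫ z, f z ∂(𝒟X.prod 𝒟Y)| ≤ ε} := by
  refine regression_mom_uniform_convergence_lipschitz_general d ℓ L hlip hℓ0 W hW (𝒟X.prod 𝒟Y)
    p hp1 hp2 v ?_ ?_ ?_ ε δ hε hδ0 m κ hm hκ0 ?_ <;>
  simpa only [Measure.fst_prod, Measure.snd_prod]
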